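/- For any odd prime p, the trace of the multiplier polynomial P_{2,p} equals 2^{2p} − 2^{p+1}, and hence v_2(tr(P_{2,p})) = p + 1. -/

import Mathlib

open Polynomial Finset

noncomputable section

/-- The critical-orbit polynomials: `a 1 = c`, `a (i+1) = (a i)^2 + c`. -/
def a : ℕ → Polynomial ℤ
  | 0 => 0
  | n + 1 => (a n) ^ 2 + X

/-- The image of an integer polynomial in the field `ℚ(c)` of rational functions. -/
def toRF (f : Polynomial ℤ) : RatFunc ℚ :=
  algebraMap (Polynomial ℚ) (RatFunc ℚ) (f.map (Int.castRingHom ℚ))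

/-- The Möbius-product formula defining the Misiurewicz polynomial `G_{m,n}`. -/
def Gform (m n : ℕ) : RatFunc ℚ :=
  (∏ k ∈ n.divisors, (toRF (a (m + k - 1) + a (m - 1))) ^ (ArithmeticFunction.moebius (n / k))) *
    (if n ∣ (m - 1) then
      ∏ k ∈ n.divisors, (toRF (a k)) ^ (-(ArithmeticFunction.moebius (n / k)))
    else 1)

/-- `G` is the Misiurewicz polynomial `G_{m,n}`. -/
def IsMisiurewicz (m n : ℕ) (G : Polynomial ℤ) : Prop :=
  G.Monic ∧ toRF G = Gform m n

/-- The image of an integer polynomial in `ℂ[c]`. -/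
def c2 (f : Polynomial ℤ) : Polynomial ℂ := f.map (Int.castRingHom ℂ)

/-- The multiplier `λ_{m,n}(α) = 2^n ∏_{i=0}^{n−1} a_{m+i}(α)`. -/
def lam (m n : ℕ) (α : ℂ) : ℂ :=
  (2 : ℂ) ^ n * ∏ i ∈ range n, Polynomial.aeval α (a (m + i))

/-- `T f g`: the sum of `f` over the roots of `g`, with multiplicity. -/
def T (f g : Polynomial ℂ) : ℂ := (g.roots.map (fun c => f.eval c)).sum

/-- The trace of the multiplier polynomial `P_{m,n} = ∏_α (x − λ_{m,n}(α))`: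
the sum of the multipliers `λ_{m,n}(α)` over the roots `α` of `G_{m,n}`. -/
def trP (m n : ℕ) (G : Polynomial ℤ) : ℂ := ((c2 G).roots.map (lam m n)).sum


lemma c2_add (f g : Polynomial ℤ) : c2 (f + g) = c2 f + c2 g := by simp [c2]

lemma c2_mul (f g : Polynomial ℤ) : c2 (f * g) = c2 f * c2 g := by simp [c2]

lemma c2_a_succ (n : ℕ) : c2 (a (n + 1)) = c2 (a n) ^ 2 + X := by
  simp [c2, a]

lemma c2_a_one : c2 (a 1) = X := by simp [c2, a]

lemma aeval_c2 (f : Polynomial ℤ) (α : ℂ) : Polynomial.aeval α f = (c2 f).eval α := by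
  simp [c2, Polynomial.aeval_def, Polynomial.eval_map]

/-- The polynomials `a_{n+1}` are monic of degree `2^n`. -/
lemma c2_a_monic (n : ℕ) : (c2 (a (n + 1))).Monic ∧ (c2 (a (n + 1))).natDegree = 2 ^ n := by
  induction n with
  | zero => simp [c2_a_one, monic_X]
  | succ n ih =>
    obtain ⟨hm, hd⟩ := ih
    have h2 : (c2 (a (n + 1)) ^ 2).natDegree = 2 ^ (n + 1) := by
      rw [hm.natDegree_pow, hd]; ring
    have hlt : (X : ℂ[X]).degree < (c2 (a (n + 1)) ^ 2).degree := by
      apply degree_lt_degree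
      rw [h2, natDegree_X]
      exact Nat.one_lt_two_pow (by omega)
    rw [c2_a_succ (n + 1)]
    refine ⟨(hm.pow 2).add_of_left hlt, ?_⟩
    rw [natDegree_add_eq_left_of_degree_lt hlt, h2]

lemma k_monic (n : ℕ) : (∏ i ∈ range n, c2 (a (i + 1))).Monic ∧
    (∏ i ∈ range n, c2 (a (i + 1))).natDegree = 2 ^ n - 1 := by
  induction n with
  | zero => simp
  | succ n ih =>
    obtain ⟨hm, hd⟩ := ih
    have h := c2_a_monic n
    rw [prod_range_succ]
    refine ⟨hm.mul h.1, ?_⟩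
    rw [hm.natDegree_mul h.1, hd, h.2, pow_succ]
    have := Nat.one_le_two_pow (n := n)
    omega

/-- Sum over roots of F as a coefficient of h times the derivative of F, modulo F. -/
lemma exists_rem (h : ℂ[X]) (s : Multiset ℂ) :
    ∃ Q R : ℂ[X], h * derivative (s.map (fun r => X - C r)).prod
      = (s.map (fun r => X - C r)).prod * Q + R ∧ R.degree < (s.card : ℕ) ∧
      R.coeff (s.card - 1) = (s.map (fun r => h.eval r)).sum := by
  induction s using Multiset.induction_on with
  | empty => exact ⟨0, 0, by simp, by simp, by simp⟩
  | cons r s ih =>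
    obtain ⟨Q, R, e, hd, hc⟩ := ih
    set F := (s.map (fun r => X - C r)).prod with hF
    have hFm : F.Monic := monic_multiset_prod_of_monic _ _ (fun r _ => monic_X_sub_C r)
    have hFd : F.natDegree = s.card := natDegree_multiset_prod_X_sub_C_eq_card s
    obtain ⟨q, hq⟩ : (X - C r) ∣ h - C (h.eval r) := X_sub_C_dvd_sub_C_eval
    have hR : R.natDegree ≤ s.card - 1 ∧ (s.card = 0 → R = 0) := by
      constructor
      · by_cases h0 : R = 0
        · simp [h0]
        · have := (natDegree_lt_iff_degree_lt h0).2 hd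
          omega
      · intro h0
        rw [h0] at hd
        exact degree_eq_bot.1 (Nat.WithBot.lt_zero_iff.1 (by simpa using hd))
    refine ⟨q + Q, C (h.eval r) * F + (X - C r) * R, ?_, ?_, ?_⟩
    · simp only [Multiset.map_cons, Multiset.prod_cons, ← hF, derivative_mul, derivative_sub,
        derivative_X, derivative_C]
      linear_combination (X - C r) * e + F * hq
    · rw [Multiset.card_cons]
      refine lt_of_le_of_lt (b := ((s.card : ℕ) : WithBot ℕ)) ?_ (by exact_mod_cast Nat.lt_succ_self _)
      rw [← natDegree_le_iff_degree_le]
      refine natDegree_add_le_of_degree_le ?_ ?_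
      · exact (natDegree_C_mul_le _ _).trans hFd.le
      · rcases Nat.eq_zero_or_pos s.card with h0 | h0
        · simp [hR.2 h0]
        · refine natDegree_mul_le.trans ?_
          rw [natDegree_X_sub_C]; omega
    · rw [Multiset.card_cons, Nat.add_sub_cancel, Multiset.map_cons, Multiset.sum_cons, ← hc,
        coeff_add, coeff_C_mul]
      have h1 : F.coeff s.card = 1 := by rw [← hFd]; exact hFm
      rw [h1, mul_one]
      congr 1
      rcases Nat.eq_zero_or_pos s.card with h0 | h0
      · simp [hR.2 h0]
      · obtain ⟨m, hm⟩ := Nat.exists_eq_succ_of_ne_zero h0.ne'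
        have h2 : R.coeff (m + 1) = 0 := by
          apply coeff_eq_zero_of_degree_lt
          rw [hm] at hd; exact hd
        rw [hm, Nat.succ_eq_add_one, sub_mul, coeff_sub, coeff_X_mul, coeff_C_mul, h2]
        simp

lemma sum_roots (h F Q R : ℂ[X]) (hF : F.Monic) (e : h * derivative F = F * Q + R)
    (hd : R.degree < F.degree) :
    (F.roots.map (fun r => h.eval r)).sum = R.coeff (F.natDegree - 1) := by
  have hs : F.Splits := IsAlgClosed.splits F
  have hp : (F.roots.map (fun r => X - C r)).prod = F :=
    (hs.eq_prod_roots_of_monic hF).symm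
  have hcard : F.roots.card = F.natDegree := hs.natDegree_eq_card_roots.symm
  obtain ⟨Q', R', e', hd', hc'⟩ := exists_rem h F.roots
  rw [hp] at e'
  rw [← hc', hcard]
  rw [hcard, ← degree_eq_natDegree hF.ne_zero] at hd'
  have h1 := div_modByMonic_unique (f := h * derivative F) Q R hF ⟨by rw [e]; ring, hd⟩
  have h2 := div_modByMonic_unique (f := h * derivative F) Q' R' hF ⟨by rw [e']; ring, hd'⟩
  rw [← h1.2, ← h2.2]

lemma key (n : ℕ) :
    ((c2 (a (n + 2) + a 1)).roots.map
      (fun r => (∏ i ∈ range (n + 1), c2 (a (i + 1))).eval r)).sum = 2 - 2 ^ (n + 2) ∧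
    (c2 (a (n + 2) + a 1)).Monic := by
  have hA := c2_a_monic n
  have hk := k_monic n
  have hF : c2 (a (n + 2) + a 1) = c2 (a (n + 1)) ^ 2 + 2 * X := by
    rw [c2_add, c2_a_succ (n + 1), c2_a_one]; ring
  rw [prod_range_succ, hF]
  set A := c2 (a (n + 1))
  set k := ∏ i ∈ range n, c2 (a (i + 1))
  obtain ⟨hAm, hAd⟩ := hA
  obtain ⟨hkm, hkd⟩ := hk
  have hpos := Nat.one_le_two_pow (n := n)
  have h2 : (A ^ 2).natDegree = 2 ^ (n + 1) := by
    rw [hAm.natDegree_pow, hAd]; ring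
  have h2m := hAm.pow 2
  have hFmd : (A ^ 2 + 2 * X).Monic ∧ (A ^ 2 + 2 * X).natDegree = 2 ^ (n + 1) := by
    have hlt : (2 * X : ℂ[X]).degree < (A ^ 2).degree := by
      apply degree_lt_degree
      rw [h2]
      have : (2 * X : ℂ[X]).natDegree ≤ 1 := (natDegree_C_mul_le 2 X).trans natDegree_X_le
      have := Nat.one_lt_two_pow (n := n + 1) (by omega)
      omega
    exact ⟨h2m.add_of_left hlt, by rw [natDegree_add_eq_left_of_degree_lt hlt, h2]⟩
  refine ⟨?_, hFmd.1⟩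
  have hkA : (k * A).Monic := hkm.mul hAm
  have hkAd : (k * A).natDegree = 2 ^ (n + 1) - 1 := by
    rw [hkm.natDegree_mul hAm, hkd, hAd, pow_succ]; omega
  have hA'd : (derivative A).natDegree ≤ 2 ^ n - 1 := by
    rw [← hAd]; exact natDegree_derivative_le A
  have hA'c : (derivative A).coeff (2 ^ n - 1) = 2 ^ n := by
    rw [coeff_derivative, Nat.sub_add_cancel hpos]
    have : A.coeff (2 ^ n) = 1 := by rw [← hAd]; exact hAm
    rw [this, Nat.cast_sub hpos]; simp
  have hXk : (X * k).natDegree ≤ 2 ^ n := by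
    refine natDegree_mul_le.trans ?_
    rw [hkd, natDegree_X]; omega
  have hXkc : (X * k).coeff (2 ^ n) = 1 := by
    have : 2 ^ n = (2 ^ n - 1) + 1 := by omega
    rw [this, coeff_X_mul, ← hkd]; exact hkm
  have hsum : 2 ^ (n + 1) - 1 = 2 ^ n + (2 ^ n - 1) := by rw [pow_succ]; omega
  have hBd : (X * k * derivative A).natDegree ≤ 2 ^ (n + 1) - 1 := by
    rw [hsum]
    exact natDegree_mul_le_of_le hXk hA'd
  have hBc : (X * k * derivative A).coeff (2 ^ (n + 1) - 1) = 2 ^ n := by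
    rw [hsum, coeff_mul_add_eq_of_natDegree_le hXk hA'd, hXkc, hA'c, one_mul]
  rw [sum_roots (k * A) (A ^ 2 + 2 * X) (2 * k * derivative A)
    (C 2 * (k * A) - C 4 * (X * k * derivative A)) hFmd.1]
  · rw [hFmd.2, coeff_sub, coeff_C_mul, coeff_C_mul, hBc]
    have : (k * A).coeff (2 ^ (n + 1) - 1) = 1 := by rw [← hkAd]; exact hkA
    rw [this]; ring
  · have e2 : (C 2 : ℂ[X]) = 2 := rfl
    have e4 : (C 4 : ℂ[X]) = 4 := rfl
    have ed : derivative (A ^ 2 + 2 * X) = 2 * A * derivative A + 2 := by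
      rw [← e2]; simp [derivative_pow]
    rw [ed, e2, e4]; ring
  · apply degree_lt_degree
    rw [hFmd.2]
    have : (C 2 * (k * A) - C 4 * (X * k * derivative A)).natDegree ≤ 2 ^ (n + 1) - 1 := by
      refine (natDegree_sub_le _ _).trans (max_le ?_ ?_)
      · exact (natDegree_C_mul_le _ _).trans hkAd.le
      · exact (natDegree_C_mul_le _ _).trans hBd
    have := Nat.one_le_two_pow (n := n + 1)
    omega

lemma toRF_inj {f g : Polynomial ℤ} (h : toRF f = toRF g) : f = g :=
  map_injective _ (RingHom.injective_int _) (RatFunc.algebraMap_injective ℚ h)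

lemma G_eq (p : ℕ) (hp : p.Prime) (G : Polynomial ℤ) (hG : IsMisiurewicz 2 p G) :
    G * (a 2 + a 1) = a (p + 1) + a 1 := by
  have h := hG.2
  have hnd : ¬ p ∣ 2 - 1 := by
    intro hd
    exact hp.one_lt.ne' (Nat.dvd_one.1 hd)
  rw [Gform, if_neg hnd, mul_one, hp.prod_divisors, Nat.div_self hp.pos, Nat.div_one,
    ArithmeticFunction.moebius_apply_prime hp, ArithmeticFunction.moebius_apply_one] at h
  have e1 : 2 + p - 1 = p + 1 := by omega
  have hne : toRF (a 2 + a 1) ≠ 0 := by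
    intro h0
    have : a 2 + a 1 = 0 := toRF_inj (h0.trans (by simp [toRF]))
    have h1 := congrArg (Polynomial.eval 1) this
    simp [a] at h1
  apply toRF_inj
  have hm : toRF (G * (a 2 + a 1)) = toRF G * toRF (a 2 + a 1) := by simp [toRF]
  rw [hm, h, e1]
  simp only [zpow_one, zpow_neg]
  norm_num
  field_simp

lemma eval_zero_a (n : ℕ) : (c2 (a n)).eval 0 = 0 := by
  induction n with
  | zero => simp [c2, a]
  | succ n ih => rw [c2_a_succ]; simp [ih]

lemma eval_neg_two_a (n : ℕ) : (c2 (a (n + 2))).eval (-2) = 2 := by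
  induction n with
  | zero => rw [c2_a_succ, c2_a_one]; norm_num
  | succ n ih => rw [c2_a_succ]; simp [ih]; norm_num

/-- For any odd prime `p`, `tr(P_{2,p}) = 2^{2p} − 2^{p+1}`, and hence
`v_2(tr(P_{2,p})) = p + 1`. -/
theorem trace_P_2_p (p : ℕ) (hp : p.Prime) (hodd : Odd p)
    (G : Polynomial ℤ) (hG : IsMisiurewicz 2 p G) :
    trP 2 p G = ((2 ^ (2 * p) - 2 ^ (p + 1) : ℤ) : ℂ) ∧
      padicValInt 2 (2 ^ (2 * p) - 2 ^ (p + 1)) = p + 1 := by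
  constructor
  · obtain ⟨n, rfl⟩ : ∃ n, p = n + 1 := ⟨p - 1, by have := hp.pos; omega⟩
    have hGe := congrArg c2 (G_eq _ hp G hG)
    obtain ⟨hsum, hmon⟩ := key n
    rw [c2_mul] at hGe
    have h21 : c2 (a 2 + a 1) = (X - C 0) * (X - C (-2)) := by
      rw [c2_add, c2_a_succ, c2_a_one]
      have e2 : (C (-2) : ℂ[X]) = -2 := by rw [C_neg]; rfl
      rw [e2, C_0]; ring
    have hne : c2 G * c2 (a 2 + a 1) ≠ 0 := by rw [hGe]; exact hmon.ne_zero
    have hroots : (c2 (a (n + 1 + 1) + a 1)).roots = (c2 G).roots + ({0} + {-2}) := by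
      rw [← hGe, roots_mul hne, h21, roots_mul (by rw [← h21]; exact right_ne_zero_of_mul hne),
        roots_X_sub_C, roots_X_sub_C]
    have hlam : ∀ α ∈ (c2 (a (n + 1 + 1) + a 1)).roots,
        lam 2 (n + 1) α =
          -2 ^ (n + 1) * (∏ i ∈ range (n + 1), c2 (a (i + 1))).eval α := by
      intro α hα
      have hr := (mem_roots'.1 hα).2
      rw [IsRoot, c2_add, eval_add, c2_a_one, eval_X] at hr
      have hr' : (c2 (a (n + 1 + 1))).eval α = -α := by linear_combination hr
      rw [lam, prod_range_succ, prod_range_succ', eval_mul, eval_prod, c2_a_one, eval_X]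
      simp only [aeval_c2]
      have e1 : 2 + n = n + 1 + 1 := by ring
      rw [e1, hr']
      have : ∀ i, 2 + i = i + 1 + 1 := fun i => by ring
      simp only [this]
      ring
    have hT : ((c2 (a (n + 1 + 1) + a 1)).roots.map (lam 2 (n + 1))).sum
        = -2 ^ (n + 1) * (2 - 2 ^ (n + 2)) := by
      rw [Multiset.map_congr rfl hlam, Multiset.sum_map_mul_left, hsum]
    have l0 : lam 2 (n + 1) 0 = 0 := by
      simp [lam, aeval_c2, eval_zero_a]
    have l2 : lam 2 (n + 1) (-2) = 2 ^ (n + 1) * 2 ^ (n + 1) := by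
      have : ∀ i, 2 + i = i + 2 := fun i => by ring
      simp [lam, aeval_c2, this, eval_neg_two_a]
    rw [hroots] at hT
    simp only [Multiset.map_add, Multiset.sum_add, Multiset.map_singleton,
      Multiset.sum_singleton, l0, l2] at hT
    rw [trP]
    push_cast
    linear_combination hT
  · have h1 : 1 < p := hp.one_lt
    obtain ⟨m, rfl⟩ : ∃ m, p = m + 2 := ⟨p - 2, by omega⟩
    have e : (2 ^ (2 * (m + 2)) - 2 ^ (m + 2 + 1) : ℤ) = 2 ^ (m + 2 + 1) * (2 ^ (m + 1) - 1) := by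
      ring
    have hnd : ¬ (2 : ℤ) ∣ 2 ^ (m + 1) - 1 := by
      rw [pow_succ]; omega
    have hne : (2 ^ (m + 1) - 1 : ℤ) ≠ 0 := by
      intro h0; rw [h0] at hnd; simp at hnd
    rw [e, padicValInt.mul (by positivity) hne, padicValInt.eq_zero_of_not_dvd hnd]
    have : padicValInt 2 (2 ^ (m + 2 + 1)) = m + 2 + 1 := by
      have : (2 ^ (m + 2 + 1) : ℤ) = ((2 ^ (m + 2 + 1) : ℕ) : ℤ) := by push_cast; rfl
      rw [this, padicValInt.of_nat, padicValNat.prime_pow]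
    rw [this]
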